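/- arXiv:1701.07682 — 3 statements merged into one kernel-verified Lean document; each statement's English description precedes it below -/
import Mathlib

section
/- Let λ > -1/2 and let j, k be integers with 1 ≤ j < k. (i) If -1/2 < λ ≤ 0 or λ ≥ 1, then (j/k)^{2λ-2} ≤ β_k²/β_j² ≤ ((j+λ)/(k+λ))^{2λ-2}. (ii) If 0 < λ ≤ 1, then (j/k)^{2λ-2} ≥ β_k²/β_j² ≥ ((j+λ)/(k+λ))^{2λ-2}. -/
/-- `h_x^2 = Γ(x+2λ)/((x+λ)Γ(x+1))`. -/
noncomputable def hsq (lam x : ℝ) : ℝ :=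
  Real.Gamma (x + 2*lam) / ((x + lam) * Real.Gamma (x + 1))

/-- `α_k = (2k-1+λ) h_{2k-1}`. -/
noncomputable def gegAlpha (lam : ℝ) (k : ℕ) : ℝ :=
  (2*(k:ℝ) - 1 + lam) * Real.sqrt (hsq lam (2*(k:ℝ) - 1))

/-- `β_k = 1/h_{2k}`. -/
noncomputable def gegBeta (lam : ℝ) (k : ℕ) : ℝ :=
  1 / Real.sqrt (hsq lam (2*(k:ℝ)))

/-- `α̃_k^2 = ((2k-2+λ) h_{2k-2})^2`, with `α̃_1^2 = λΓ(2λ) = Γ(2λ+1)/2`. -/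
noncomputable def gegAlphaTildeSq (lam : ℝ) (k : ℕ) : ℝ :=
  if k = 1 then Real.Gamma (2*lam + 1) / 2
  else (2*(k:ℝ) - 2 + lam)^2 * hsq lam (2*(k:ℝ) - 2)

/-- `β̃_k = 1/h_{2k-1}`. -/
noncomputable def gegBetaTilde (lam : ℝ) (k : ℕ) : ℝ :=
  1 / Real.sqrt (hsq lam (2*(k:ℝ) - 1))

/-- The matrix `A_m` with entries `a_{kj} = (Σ_{i=1}^{min(k,j)} α_i^2) β_k β_j` (1-based). -/
noncomputable def Amat (lam : ℝ) (m : ℕ) : Matrix (Fin m) (Fin m) ℝ :=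
  fun k j => (∑ i ∈ Finset.Icc 1 (min (k.val+1) (j.val+1)), (gegAlpha lam i)^2) *
    gegBeta lam (k.val+1) * gegBeta lam (j.val+1)

/-- The matrix `Ã_m` with entries `ã_{kj} = (Σ_{i=1}^{min(k,j)} α̃_i^2) β̃_k β̃_j` (1-based). -/
noncomputable def AmatTilde (lam : ℝ) (m : ℕ) : Matrix (Fin m) (Fin m) ℝ :=
  fun k j => (∑ i ∈ Finset.Icc 1 (min (k.val+1) (j.val+1)), gegAlphaTildeSq lam i) *
    gegBetaTilde lam (k.val+1) * gegBetaTilde lam (j.val+1)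

/-- `B_n = 4 A_m` for `n = 2m` and `B_n = 4 Ã_m` for `n = 2m-1`; in both cases `m = (n+1)/2`. -/
noncomputable def Bmat (lam : ℝ) (n : ℕ) : Matrix (Fin ((n+1)/2)) (Fin ((n+1)/2)) ℝ :=
  if n % 2 = 0 then (4:ℝ) • Amat lam ((n+1)/2) else (4:ℝ) • AmatTilde lam ((n+1)/2)

/-- Maximum absolute row-sum norm. -/
noncomputable def rowSumNorm {m : ℕ} (A : Matrix (Fin m) (Fin m) ℝ) : ℝ :=
  ⨆ k, ∑ j, |A k j|

/-- Squared Frobenius norm. -/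
noncomputable def frobSq {m : ℕ} (A : Matrix (Fin m) (Fin m) ℝ) : ℝ :=
  ∑ k, ∑ j, (A k j)^2

/-!
One step of the ratio factors as `h_x² / h_{x+1}² = u v` with `u = (x + 1) / (x + λ)` and
`v = (x + 1 + λ) / (x + 2λ)`. For `0 ≤ λ ≤ 1`, Bernoulli's inequality with exponent `1 - λ`, applied
to `x / (x + 1)` and to `(y + 1) / y` for `y = x + 2λ`, gives the outer inequalities of
`(y / (y + 1)) ^ (λ - 1) ≤ v ≤ u ≤ (x / (x + 1)) ^ (λ - 1)`,
while the middle one amounts to `λ² ≤ λ`. Hence `u v` lies between the squares of the two ends, and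
these bounds telescope. For `λ ≤ 0` or `1 ≤ λ` every inequality of the chain is reversed.
-/

open Set

lemma mul_mem_Icc_sq {R : Type*} [Semiring R] [PartialOrder R] [IsOrderedRing R] {a u v b : R}
    (ha : 0 ≤ a) (hau : a ≤ u) (huv : u ≤ v) (hvb : v ≤ b) : u * v ∈ Icc (a ^ 2) (b ^ 2) := by
  have hav := hau.trans huv
  have hub := huv.trans hvb
  rw [pow_two, pow_two]
  exact ⟨mul_le_mul hau hav ha (ha.trans hau),
    mul_le_mul hub hvb (ha.trans hav) (ha.trans (hau.trans hub))⟩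

section Bernoulli

variable {a b p lam x y : ℝ}

lemma one_add_mul_sub_one_le_rpow {r : ℝ} (hr : 0 < r) (hp : p ≤ 0 ∨ 1 ≤ p) :
    1 + p * (r - 1) ≤ r ^ p := by
  have bernoulli {s q : ℝ} (hs : 0 < s) (hq : 1 ≤ q) : 1 + q * (s - 1) ≤ s ^ q := by
    simpa using one_add_mul_self_le_rpow_one_add (s := s - 1) (by linarith) hq
  rcases hp with hp | hp
  · calc 1 + p * (r - 1) = r * (1 + (1 - p) * (r⁻¹ - 1)) := by field_simp; ring
      _ ≤ r * r⁻¹ ^ (1 - p) := by gcongr; exact bernoulli (inv_pos.2 hr) (by linarith)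
      _ = r * r ^ (p - 1) := by rw [← Real.rpow_neg_eq_inv_rpow, neg_sub]
      _ = r ^ p := by rw [Real.rpow_sub_one hr.ne', mul_div_cancel₀ _ hr.ne']
  · exact bernoulli hr hp

lemma div_rpow_le_weighted_mean_div (ha : 0 < a) (hb : 0 < b) (hp₀ : 0 ≤ p) (hp₁ : p ≤ 1) :
    (a / b) ^ p ≤ (p * a + (1 - p) * b) / b := by
  have hab : 0 < a / b := div_pos ha hb
  calc (a / b) ^ p ≤ 1 + p * (a / b - 1) := by
        simpa using rpow_one_add_le_one_add_mul_self (s := a / b - 1) (by linarith) hp₀ hp₁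
    _ = (p * a + (1 - p) * b) / b := by field_simp; ring

lemma weighted_mean_div_le_div_rpow (ha : 0 < a) (hb : 0 < b) (hp : p ≤ 0 ∨ 1 ≤ p) :
    (p * a + (1 - p) * b) / b ≤ (a / b) ^ p := by
  calc (p * a + (1 - p) * b) / b = 1 + p * (a / b - 1) := by field_simp; ring
    _ ≤ (a / b) ^ p := one_add_mul_sub_one_le_rpow (div_pos ha hb) hp

lemma div_rpow_sub_one (ha : 0 ≤ a) (hb : 0 ≤ b) (p : ℝ) :
    (a / b) ^ (p - 1) = (b / a) ^ (1 - p) := by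
  rw [← neg_sub 1 p, Real.rpow_neg (by positivity), ← Real.inv_rpow (by positivity), inv_div]

lemma rpow_two_mul_sub_two {r : ℝ} (hr : 0 ≤ r) (p : ℝ) :
    r ^ (2 * p - 2) = (r ^ (p - 1)) ^ 2 := by
  rw [← Real.rpow_mul_natCast hr, Nat.cast_ofNat, sub_mul, one_mul, mul_comm p]

lemma add_one_div_add_le_div_rpow (hx : 0 < x) (h₀ : 0 ≤ lam) (h₁ : lam ≤ 1) :
    (x + 1) / (x + lam) ≤ (x / (x + 1)) ^ (lam - 1) := by
  have h := div_rpow_le_weighted_mean_div hx (by positivity : 0 < x + 1)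
    (sub_nonneg.2 h₁) (sub_le_self 1 h₀)
  rw [show (1 - lam) * x + (1 - (1 - lam)) * (x + 1) = x + lam by ring] at h
  rw [← inv_div (x + lam), ← neg_sub 1 lam, Real.rpow_neg (by positivity)]
  gcongr

lemma div_rpow_le_add_one_div_add (hx : 0 < x) (hl : 0 < x + lam) (h : lam ≤ 0 ∨ 1 ≤ lam) :
    (x / (x + 1)) ^ (lam - 1) ≤ (x + 1) / (x + lam) := by
  have h := weighted_mean_div_le_div_rpow hx (by positivity : 0 < x + 1)
    (p := 1 - lam) (h.symm.imp sub_nonpos.2 (le_sub_self_iff 1).2)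
  rw [show (1 - lam) * x + (1 - (1 - lam)) * (x + 1) = x + lam by ring] at h
  rw [← inv_div (x + lam), ← neg_sub 1 lam, Real.rpow_neg (by positivity)]
  gcongr

lemma div_rpow_le_add_one_sub_div (hy : 0 < y) (h₀ : 0 ≤ lam) (h₁ : lam ≤ 1) :
    (y / (y + 1)) ^ (lam - 1) ≤ (y + 1 - lam) / y := by
  have h := div_rpow_le_weighted_mean_div (by positivity : 0 < y + 1) hy
    (sub_nonneg.2 h₁) (sub_le_self 1 h₀)
  rwa [show (1 - lam) * (y + 1) + (1 - (1 - lam)) * y = y + 1 - lam by ring,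
    ← div_rpow_sub_one hy.le (by positivity)] at h

lemma add_one_sub_div_le_div_rpow (hy : 0 < y) (h : lam ≤ 0 ∨ 1 ≤ lam) :
    (y + 1 - lam) / y ≤ (y / (y + 1)) ^ (lam - 1) := by
  have h := weighted_mean_div_le_div_rpow (by positivity : 0 < y + 1) hy
    (p := 1 - lam) (h.symm.imp sub_nonpos.2 (le_sub_self_iff 1).2)
  rwa [show (1 - lam) * (y + 1) + (1 - (1 - lam)) * y = y + 1 - lam by ring,
    ← div_rpow_sub_one hy.le (by positivity)] at h

end Bernoulli

section Telescoping

lemma div_le_div_of_forall_succ {K : Type*} [Field K] [LinearOrder K] [IsStrictOrderedRing K]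
    {f g : ℕ → K} (hf : ∀ n, 0 < f n) (hg : ∀ n, 0 < g n)
    (h : ∀ n, f n / f (n + 1) ≤ g n / g (n + 1)) (n : ℕ) : f 0 / f n ≤ g 0 / g n := by
  have hmono : Monotone fun n ↦ f n / g n := monotone_nat_of_le_succ fun n ↦ by
    have := h n
    rw [div_le_div_iff₀ (hf _) (hg _)] at this
    rw [div_le_div_iff₀ (hg _) (hg _)]
    linarith
  have := hmono n.zero_le
  rw [div_le_div_iff₀ (hg _) (hg _)] at this
  rw [div_le_div_iff₀ (hf _) (hg _)]
  linarith

lemma div_mem_Icc_rpow_of_forall_succ {f : ℕ → ℝ} {y z p : ℝ} (hf : ∀ n, 0 < f n)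
    (hy : 0 < y) (hz : 0 < z)
    (h : ∀ n : ℕ, f n / f (n + 1) ∈
      Icc (((y + n) / (y + n + 1)) ^ p) (((z + n) / (z + n + 1)) ^ p)) (n : ℕ) :
    f 0 / f n ∈ Icc ((y / (y + n)) ^ p) ((z / (z + n)) ^ p) := by
  have pos {w : ℝ} (hw : 0 < w) (n : ℕ) : 0 < (w + n) ^ p := by positivity
  have ratio {w : ℝ} (hw : 0 < w) (n : ℕ) :
      ((w + n) / (w + n + 1)) ^ p = (w + n) ^ p / (w + (n + 1 : ℕ)) ^ p := by
    rw [Real.div_rpow (by positivity) (by positivity), Nat.cast_succ, add_assoc]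
  rw [Real.div_rpow hy.le (by positivity), Real.div_rpow hz.le (by positivity)]
  constructor
  · simpa using div_le_div_of_forall_succ (pos hy) hf (fun n ↦ ratio hy n ▸ (h n).1) n
  · simpa using div_le_div_of_forall_succ hf (pos hz) (fun n ↦ ratio hz n ▸ (h n).2) n

end Telescoping

section Hsq

variable {lam x : ℝ}

lemma hsq_pos (hx : 0 < x) (hl : 0 < x + 2 * lam) : 0 < hsq lam x := by
  have hxl : 0 < x + lam := by linarith
  have := Real.Gamma_pos_of_pos hl
  have := Real.Gamma_pos_of_pos (by positivity : 0 < x + 1)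
  unfold hsq
  positivity

lemma hsq_div_hsq_add_one (hx : 0 < x) (hl : 0 < x + 2 * lam) :
    hsq lam x / hsq lam (x + 1) = (x + 1) / (x + lam) * ((x + 1 + lam) / (x + 2 * lam)) := by
  have hxl : 0 < x + lam := by linarith
  have hx1 : 0 < x + 1 := by positivity
  have hx1l : 0 < x + 1 + lam := by linarith
  have := Real.Gamma_pos_of_pos hl
  have := Real.Gamma_pos_of_pos hx1
  rw [hsq, hsq, add_right_comm x 1, Real.Gamma_add_one hl.ne', Real.Gamma_add_one hx1.ne']
  field_simp

lemma add_one_div_add_le_iff (hx : 0 < x) (hl : 0 < x + 2 * lam) :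
    (x + 1) / (x + lam) ≤ (x + 1 + lam) / (x + 2 * lam) ↔ lam ≤ lam ^ 2 := by
  rw [div_le_div_iff₀ (by linarith) hl]
  constructor <;> intro <;> linarith

lemma add_one_add_div_le_iff (hx : 0 < x) (hl : 0 < x + 2 * lam) :
    (x + 1 + lam) / (x + 2 * lam) ≤ (x + 1) / (x + lam) ↔ lam ^ 2 ≤ lam := by
  rw [div_le_div_iff₀ hl (by linarith)]
  constructor <;> intro <;> linarith

lemma hsq_div_hsq_add_one_mem_Icc_of_nonneg_of_le_one (hx : 0 < x) (h₀ : 0 ≤ lam)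
    (h₁ : lam ≤ 1) :
    hsq lam x / hsq lam (x + 1) ∈
      Icc (((x + 2 * lam) / (x + 2 * lam + 1)) ^ (2 * lam - 2))
        ((x / (x + 1)) ^ (2 * lam - 2)) := by
  have hl : 0 < x + 2 * lam := by positivity
  have hv : ((x + 2 * lam) / (x + 2 * lam + 1)) ^ (lam - 1) ≤ (x + 1 + lam) / (x + 2 * lam) :=
    (div_rpow_le_add_one_sub_div hl h₀ h₁).trans_eq (by ring)
  have hvu : (x + 1 + lam) / (x + 2 * lam) ≤ (x + 1) / (x + lam) :=
    (add_one_add_div_le_iff hx hl).2 (pow_le_of_le_one h₀ h₁ two_ne_zero)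
  have hu : (x + 1) / (x + lam) ≤ (x / (x + 1)) ^ (lam - 1) :=
    add_one_div_add_le_div_rpow hx h₀ h₁
  rw [hsq_div_hsq_add_one hx hl, mul_comm ((x + 1) / _),
    rpow_two_mul_sub_two (by positivity), rpow_two_mul_sub_two (by positivity)]
  exact mul_mem_Icc_sq (by positivity) hv hvu hu

lemma hsq_div_hsq_add_one_mem_Icc_of_nonpos_or_one_le (hx : 0 < x) (hl : 0 < x + 2 * lam)
    (h : lam ≤ 0 ∨ 1 ≤ lam) :
    hsq lam x / hsq lam (x + 1) ∈
      Icc ((x / (x + 1)) ^ (2 * lam - 2))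
        (((x + 2 * lam) / (x + 2 * lam + 1)) ^ (2 * lam - 2)) := by
  have hu : (x / (x + 1)) ^ (lam - 1) ≤ (x + 1) / (x + lam) :=
    div_rpow_le_add_one_div_add hx (by linarith) h
  have huv : (x + 1) / (x + lam) ≤ (x + 1 + lam) / (x + 2 * lam) :=
    (add_one_div_add_le_iff hx hl).2 (by rcases h with h | h <;> nlinarith)
  have hv : (x + 1 + lam) / (x + 2 * lam) ≤ ((x + 2 * lam) / (x + 2 * lam + 1)) ^ (lam - 1) :=
    Eq.trans_le (by ring) (add_one_sub_div_le_div_rpow hl h)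
  rw [hsq_div_hsq_add_one hx hl, rpow_two_mul_sub_two (by positivity),
    rpow_two_mul_sub_two (by positivity)]
  exact mul_mem_Icc_sq (by positivity) hu huv hv

lemma hsq_div_hsq_add_natCast_mem_Icc_of_nonneg_of_le_one (hx : 0 < x) (h₀ : 0 ≤ lam)
    (h₁ : lam ≤ 1) (n : ℕ) :
    hsq lam x / hsq lam (x + n) ∈
      Icc (((x + 2 * lam) / (x + 2 * lam + n)) ^ (2 * lam - 2))
        ((x / (x + n)) ^ (2 * lam - 2)) := by
  have step (n : ℕ) :=
    hsq_div_hsq_add_one_mem_Icc_of_nonneg_of_le_one (by positivity : 0 < x + n) h₀ h₁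
  simpa using div_mem_Icc_rpow_of_forall_succ (f := fun n ↦ hsq lam (x + n))
    (fun n ↦ hsq_pos (by positivity) (by positivity)) (by positivity : 0 < x + 2 * lam) hx
    (fun n ↦ by simpa [add_assoc, add_left_comm, add_comm] using step n) n

lemma hsq_div_hsq_add_natCast_mem_Icc_of_nonpos_or_one_le (hx : 0 < x) (hl : 0 < x + 2 * lam)
    (h : lam ≤ 0 ∨ 1 ≤ lam) (n : ℕ) :
    hsq lam x / hsq lam (x + n) ∈
      Icc ((x / (x + n)) ^ (2 * lam - 2))
        (((x + 2 * lam) / (x + 2 * lam + n)) ^ (2 * lam - 2)) := by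
  have hln (n : ℕ) : 0 < x + n + 2 * lam := by rw [add_right_comm]; positivity
  have step (n : ℕ) :=
    hsq_div_hsq_add_one_mem_Icc_of_nonpos_or_one_le (by positivity : 0 < x + n) (hln n) h
  simpa using div_mem_Icc_rpow_of_forall_succ (f := fun n ↦ hsq lam (x + n))
    (fun n ↦ hsq_pos (by positivity) (hln n)) hx hl
    (fun n ↦ by simpa [add_assoc, add_left_comm, add_comm] using step n) n

lemma gegBeta_sq {k : ℕ} (h : 0 ≤ hsq lam (2 * k)) : gegBeta lam k ^ 2 = (hsq lam (2 * k))⁻¹ := by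
  rw [gegBeta, div_pow, one_pow, Real.sq_sqrt h, one_div]

end Hsq

theorem beta_ratio_bounds_general (lam : ℝ) (j k : ℕ) (hj : 1 ≤ j) (hlam : 0 < (j : ℝ) + lam)
    (hjk : j ≤ k) :
    ((lam ≤ 0 ∨ 1 ≤ lam) →
      ((j : ℝ) / k) ^ (2 * lam - 2) ≤ gegBeta lam k ^ 2 / gegBeta lam j ^ 2 ∧
      gegBeta lam k ^ 2 / gegBeta lam j ^ 2 ≤ ((j + lam) / (k + lam)) ^ (2 * lam - 2)) ∧
    (0 < lam → lam ≤ 1 →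
      ((j + lam) / (k + lam)) ^ (2 * lam - 2) ≤ gegBeta lam k ^ 2 / gegBeta lam j ^ 2 ∧
      gegBeta lam k ^ 2 / gegBeta lam j ^ 2 ≤ ((j : ℝ) / k) ^ (2 * lam - 2)) := by
  have hj₀ : (0 : ℝ) < 2 * j := by positivity
  have hjl : 0 < 2 * (j : ℝ) + 2 * lam := by linarith
  have hjk' : (j : ℝ) ≤ k := Nat.cast_le.2 hjk
  have hk : 2 * (j : ℝ) + (2 * (k - j) : ℕ) = 2 * k := by push_cast [hjk]; ring
  have hkl : 2 * (j : ℝ) + 2 * lam + (2 * (k - j) : ℕ) = 2 * k + 2 * lam := by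
    rw [add_right_comm, hk]
  rw [gegBeta_sq (hsq_pos hj₀ hjl).le, gegBeta_sq (hsq_pos (by linarith) (by linarith)).le,
    inv_div_inv, ← mul_div_mul_left (j : ℝ) k two_ne_zero,
    ← mul_div_mul_left (j + lam) (k + lam) two_ne_zero]
  constructor
  · intro h
    simpa only [hk, hkl, mul_add, mem_Icc] using
      hsq_div_hsq_add_natCast_mem_Icc_of_nonpos_or_one_le hj₀ hjl h (2 * (k - j))
  · intro h₀ h₁
    simpa only [hk, hkl, mul_add, mem_Icc] using
      hsq_div_hsq_add_natCast_mem_Icc_of_nonneg_of_le_one hj₀ h₀.le h₁ (2 * (k - j))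

theorem beta_ratio_bounds (lam : ℝ) (hlam : -(1/2 : ℝ) < lam)
    (j k : ℕ) (hj : 1 ≤ j) (hjk : j < k) :
    ((lam ≤ 0 ∨ 1 ≤ lam) →
      ((j : ℝ)/(k : ℝ)) ^ (2*lam - 2) ≤ (gegBeta lam k)^2 / (gegBeta lam j)^2 ∧
      (gegBeta lam k)^2 / (gegBeta lam j)^2 ≤ (((j : ℝ) + lam)/((k : ℝ) + lam)) ^ (2*lam - 2)) ∧
    (0 < lam → lam ≤ 1 →
      (((j : ℝ) + lam)/((k : ℝ) + lam)) ^ (2*lam - 2) ≤ (gegBeta lam k)^2 / (gegBeta lam j)^2 ∧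
      (gegBeta lam k)^2 / (gegBeta lam j)^2 ≤ ((j : ℝ)/(k : ℝ)) ^ (2*lam - 2)) :=
  beta_ratio_bounds_general lam j k hj (by linarith [(Nat.one_le_cast (α := ℝ)).2 hj]) hjk.le
end

section
/- Let r ≥ 1, let α_1, …, α_r > 0 be real numbers with s = Σ_{i=1}^{r} α_i, let γ_1, …, γ_r be real numbers with γ_min ≤ γ_i ≤ γ_max for all i, where γ_min = min_i γ_i and γ_max = max_i γ_i, and set f(x) = (x+γ_1)^{α_1}(x+γ_2)^{α_2}⋯(x+γ_r)^{α_r}. Then for all real x > x_0 with x_0 + γ_min ≥ 0: (1/(s+1))·[(x+γ_min)f(x) − (x_0+γ_min)f(x_0)] ≤ ∫_{x_0}^{x} f(t) dt ≤ (1/(s+1))·(x+γ_max)f(x). -/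
/-!
Write `f t = ∏ i, (t + γ i) ^ α i`. For every constant `c`,
`((t + c) f)' = (∑ i, α i (t + c) / (t + γ i) + 1) f`. If `c ≤ γ i` for all `i`, each ratio
`(t + c) / (t + γ i)` is at most `1` and the derivative is at most `(∑ i, α i + 1) f`; if `γ i ≤ c`
for all `i`, both inequalities are reversed. Integrating over `[x₀, x]` with `c = γmin` and
`c = γmax` gives the two bounds.
-/

section ProdAddRpow

variable {ι : Type*} {s : Finset ι} {α γ : ι → ℝ} {c t x₀ x : ℝ}

theorem prod_add_rpow_nonneg (h : ∀ i ∈ s, 0 ≤ t + γ i) : 0 ≤ ∏ i ∈ s, (t + γ i) ^ α i :=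
  Finset.prod_nonneg fun i hi ↦ Real.rpow_nonneg (h i hi) _

theorem continuous_prod_add_rpow (hα : ∀ i ∈ s, 0 ≤ α i) :
    Continuous fun t : ℝ ↦ ∏ i ∈ s, (t + γ i) ^ α i :=
  continuous_finsetProd s fun i hi ↦
    (continuous_id.add continuous_const).rpow_const fun _ ↦ Or.inr (hα i hi)

theorem continuous_add_mul_prod_add_rpow (hα : ∀ i ∈ s, 0 ≤ α i) :
    Continuous fun t : ℝ ↦ (t + c) * ∏ i ∈ s, (t + γ i) ^ α i :=
  (continuous_id.add continuous_const).mul (continuous_prod_add_rpow hα)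

theorem hasDerivAt_prod_add_rpow (ht : ∀ i ∈ s, t + γ i ≠ 0) :
    HasDerivAt (fun t : ℝ ↦ ∏ i ∈ s, (t + γ i) ^ α i)
      ((∑ i ∈ s, α i / (t + γ i)) * ∏ i ∈ s, (t + γ i) ^ α i) t := by
  classical
  have hfactor : ∀ i ∈ s, HasDerivAt (fun t : ℝ ↦ (t + γ i) ^ α i)
      (1 * α i * (t + γ i) ^ (α i - 1)) t :=
    fun i hi ↦ ((hasDerivAt_id t).add_const (γ i)).rpow_const (Or.inl (ht i hi))
  refine (HasDerivAt.fun_finsetProd hfactor).congr_deriv ?_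
  rw [Finset.sum_mul]
  refine Finset.sum_congr rfl fun i hi ↦ ?_
  rw [← Finset.prod_erase_mul _ _ hi, Real.rpow_sub_one (ht i hi), smul_eq_mul]
  ring

theorem hasDerivAt_add_mul_prod_add_rpow (ht : ∀ i ∈ s, t + γ i ≠ 0) :
    HasDerivAt (fun t : ℝ ↦ (t + c) * ∏ i ∈ s, (t + γ i) ^ α i)
      ((∑ i ∈ s, α i * ((t + c) / (t + γ i)) + 1) * ∏ i ∈ s, (t + γ i) ^ α i) t := by
  refine (((hasDerivAt_id t).add_const c).mul (hasDerivAt_prod_add_rpow ht)).congr_deriv ?_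
  have hsum : ∑ i ∈ s, α i * ((t + c) / (t + γ i)) = (t + c) * ∑ i ∈ s, α i / (t + γ i) := by
    rw [Finset.mul_sum]
    exact Finset.sum_congr rfl fun i _ ↦ mul_div_left_comm _ _ _
  rw [hsum, id]
  ring

theorem sum_mul_add_div_add_le_sum (hα : ∀ i ∈ s, 0 ≤ α i) (hc : ∀ i ∈ s, c ≤ γ i)
    (ht : ∀ i ∈ s, 0 < t + γ i) :
    ∑ i ∈ s, α i * ((t + c) / (t + γ i)) ≤ ∑ i ∈ s, α i :=
  Finset.sum_le_sum fun i hi ↦ mul_le_of_le_one_right (hα i hi) <|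
    (div_le_one (ht i hi)).2 (add_le_add_right (hc i hi) t)

theorem sum_le_sum_mul_add_div_add (hα : ∀ i ∈ s, 0 ≤ α i) (hc : ∀ i ∈ s, γ i ≤ c)
    (ht : ∀ i ∈ s, 0 < t + γ i) :
    ∑ i ∈ s, α i ≤ ∑ i ∈ s, α i * ((t + c) / (t + γ i)) :=
  Finset.sum_le_sum fun i hi ↦ le_mul_of_one_le_right (hα i hi) <|
    (one_le_div (ht i hi)).2 (add_le_add_right (hc i hi) t)

theorem add_mul_prod_add_rpow_sub_le_integral (hα : ∀ i ∈ s, 0 ≤ α i) (hc : ∀ i ∈ s, c ≤ γ i)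
    (hx₀ : ∀ i ∈ s, 0 ≤ x₀ + γ i) (hx : x₀ ≤ x) :
    (x + c) * (∏ i ∈ s, (x + γ i) ^ α i) - (x₀ + c) * ∏ i ∈ s, (x₀ + γ i) ^ α i
      ≤ (∑ i ∈ s, α i + 1) * ∫ t in x₀..x, ∏ i ∈ s, (t + γ i) ^ α i := by
  have hpos : ∀ t ∈ Set.Ioo x₀ x, ∀ i ∈ s, 0 < t + γ i :=
    fun t ht i hi ↦ by linarith [hx₀ i hi, ht.1]
  rw [← intervalIntegral.integral_const_mul]
  refine intervalIntegral.sub_le_integral_of_hasDeriv_right_of_le hx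
    (continuous_add_mul_prod_add_rpow hα).continuousOn
    (fun t ht ↦ (hasDerivAt_add_mul_prod_add_rpow
      fun i hi ↦ (hpos t ht i hi).ne').hasDerivWithinAt)
    ((continuous_prod_add_rpow hα).const_mul _).integrableOn_Icc fun t ht ↦ ?_
  have hf := prod_add_rpow_nonneg (α := α) fun i hi ↦ (hpos t ht i hi).le
  have hsum := sum_mul_add_div_add_le_sum hα hc (hpos t ht)
  gcongr

theorem integral_le_add_mul_prod_add_rpow_sub (hα : ∀ i ∈ s, 0 ≤ α i) (hc : ∀ i ∈ s, γ i ≤ c)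
    (hx₀ : ∀ i ∈ s, 0 ≤ x₀ + γ i) (hx : x₀ ≤ x) :
    (∑ i ∈ s, α i + 1) * (∫ t in x₀..x, ∏ i ∈ s, (t + γ i) ^ α i)
      ≤ (x + c) * (∏ i ∈ s, (x + γ i) ^ α i) - (x₀ + c) * ∏ i ∈ s, (x₀ + γ i) ^ α i := by
  have hpos : ∀ t ∈ Set.Ioo x₀ x, ∀ i ∈ s, 0 < t + γ i :=
    fun t ht i hi ↦ by linarith [hx₀ i hi, ht.1]
  rw [← intervalIntegral.integral_const_mul]
  refine intervalIntegral.integral_le_sub_of_hasDeriv_right_of_le hx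
    (continuous_add_mul_prod_add_rpow hα).continuousOn
    (fun t ht ↦ (hasDerivAt_add_mul_prod_add_rpow
      fun i hi ↦ (hpos t ht i hi).ne').hasDerivWithinAt)
    ((continuous_prod_add_rpow hα).const_mul _).integrableOn_Icc fun t ht ↦ ?_
  have hf := prod_add_rpow_nonneg (α := α) fun i hi ↦ (hpos t ht i hi).le
  have hsum := sum_le_sum_mul_add_div_add hα hc (hpos t ht)
  gcongr

end ProdAddRpow

theorem integral_product_bounds (r : ℕ) (hr : 1 ≤ r) (α γ : Fin r → ℝ)
    (hα : ∀ i, 0 < α i) (γmin γmax : ℝ)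
    (hmin : IsLeast (Set.range γ) γmin) (hmax : IsGreatest (Set.range γ) γmax)
    (x₀ x : ℝ) (hx₀ : 0 ≤ x₀ + γmin) (hx : x₀ < x) :
    1/(∑ i, α i + 1) *
        ((x + γmin) * (∏ i, (x + γ i) ^ (α i)) - (x₀ + γmin) * ∏ i, (x₀ + γ i) ^ (α i))
      ≤ (∫ t in x₀..x, ∏ i, (t + γ i) ^ (α i)) ∧
    (∫ t in x₀..x, ∏ i, (t + γ i) ^ (α i))
      ≤ 1/(∑ i, α i + 1) * ((x + γmax) * ∏ i, (x + γ i) ^ (α i)) := by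
  have hγmin : ∀ i ∈ Finset.univ, γmin ≤ γ i := fun i _ ↦ hmin.2 ⟨i, rfl⟩
  have hγmax : ∀ i ∈ Finset.univ, γ i ≤ γmax := fun i _ ↦ hmax.2 ⟨i, rfl⟩
  have hα₀ : ∀ i ∈ Finset.univ, 0 ≤ α i := fun i _ ↦ (hα i).le
  have hx₀γ : ∀ i ∈ Finset.univ, 0 ≤ x₀ + γ i := fun i hi ↦ by linarith [hγmin i hi]
  have hx₀γmax : 0 ≤ x₀ + γmax := by linarith [hmax.2 hmin.1]
  have hsum : 0 < ∑ i, α i + 1 := by linarith [Finset.sum_nonneg hα₀]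
  rw [one_div, inv_mul_le_iff₀ hsum, le_inv_mul_iff₀ hsum]
  exact ⟨add_mul_prod_add_rpow_sub_le_integral hα₀ hγmin hx₀γ hx.le,
    (integral_le_add_mul_prod_add_rpow_sub hα₀ hγmax hx₀γ hx.le).trans
      (sub_le_self _ (mul_nonneg hx₀γmax (prod_add_rpow_nonneg hx₀γ)))⟩
end

section
/- Let λ > 2 and let n ≥ 1 be a natural number. Then the maximum absolute row-sum norm of B_n satisfies ‖B_n‖_∞ ≤ (1/((λ+2)(λ+3)))·n(n+λ)(n+2λ)(n+3λ+6) ≤ (1/((λ+2)(λ+3)))·n(n+2λ+2)³. -/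
/-!
Both `A_m` and `Ã_m` are kernels `s_{min(k,j)} b_k b_j`, where the partial sums
`s = ∑ (x + λ)² h_x²` telescope to a quotient of Gamma functions. The part of a row left of the
diagonal is again bounded by telescoping. The part right of it is awkward to bound in every row, but
only the maximal row matters: comparing that row with its successor shows that its right part is at
most `(λ - 1)/(λ + 2)` times its left part.
-/

section RowSumNorm

variable {m : ℕ}

lemma rowSumNorm_smul (c : ℝ) (A : Matrix (Fin m) (Fin m) ℝ) :
    rowSumNorm (c • A) = |c| * rowSumNorm A := by
  simp only [rowSumNorm, Real.mul_iSup_of_nonneg (abs_nonneg c), Finset.mul_sum, Matrix.smul_apply,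
    smul_eq_mul, abs_mul]

/-- The matrix with entries `s_{min(k,j)} b_k b_j`, with indices starting at `0`. -/
def minKernel (s b : ℕ → ℝ) (m : ℕ) : Matrix (Fin m) (Fin m) ℝ :=
  Matrix.of fun k j => s (min (k : ℕ) j) * b k * b j

/-- The sum of row `k` of `minKernel s b m`, split after the diagonal. -/
def minKernelRow (s b : ℕ → ℝ) (m k : ℕ) : ℝ :=
  b k * (∑ j ∈ Finset.range (k + 1), s j * b j + s k * ∑ j ∈ Finset.Ico (k + 1) m, b j)

variable {s b : ℕ → ℝ}

lemma sum_minKernel_apply (s b : ℕ → ℝ) (k : Fin m) :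
    ∑ j, minKernel s b m k j = minKernelRow s b m k := by
  have hleft : ∀ j ∈ Finset.range (k + 1), s (min (k : ℕ) j) * b k * b j = b k * (s j * b j) := by
    intro j hj
    rw [min_eq_right (Nat.lt_succ_iff.mp (Finset.mem_range.mp hj))]
    ring
  have hright : ∀ j ∈ Finset.Ico (k + 1 : ℕ) m,
      s (min (k : ℕ) j) * b k * b j = b k * (s k * b j) := by
    intro j hj
    rw [min_eq_left (Nat.le_of_succ_le (Finset.mem_Ico.mp hj).1)]
    ring
  simp only [minKernel, Matrix.of_apply]
  rw [← Finset.sum_range fun j => s (min (k : ℕ) j) * b k * b j,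
    ← Finset.sum_range_add_sum_Ico _ (Nat.succ_le_of_lt k.isLt), Finset.sum_congr rfl hleft,
    Finset.sum_congr rfl hright, minKernelRow, Finset.mul_sum, mul_add, Finset.mul_sum,
    Finset.mul_sum]

lemma minKernelRow_succ (s b : ℕ → ℝ) {k : ℕ} (hk : k + 1 < m) :
    minKernelRow s b m (k + 1) = b (k + 1) *
      (∑ j ∈ Finset.range (k + 1), s j * b j + s (k + 1) * ∑ j ∈ Finset.Ico (k + 1) m, b j) := by
  rw [minKernelRow, Finset.sum_range_succ, Finset.sum_eq_sum_Ico_succ_bot hk]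
  ring

lemma right_le_of_succ_row_le {S S' B B' L U ρ σ κ : ℝ} (hB' : 0 < B') (hS : 0 ≤ S) (hL : 0 ≤ L)
    (hU : 0 ≤ U) (hσ : 0 < σ) (hBρ : B ≤ ρ * B') (hSσ : (ρ + σ) * S ≤ S') (hρ : ρ - 1 ≤ κ * σ)
    (hrow : B' * (L + S' * U) ≤ B * (L + S * U)) :
    S * U ≤ κ * L := by
  have hcancel : L + S' * U ≤ ρ * (L + S * U) := by
    refine le_of_mul_le_mul_left ?_ hB'
    calc B' * (L + S' * U) ≤ B * (L + S * U) := hrow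
      _ ≤ ρ * B' * (L + S * U) := by gcongr
      _ = B' * (ρ * (L + S * U)) := by ring
  refine le_of_mul_le_mul_left ?_ hσ
  calc σ * (S * U) = (ρ + σ) * S * U - ρ * (S * U) := by ring
    _ ≤ S' * U - ρ * (S * U) := by gcongr
    _ ≤ (ρ - 1) * L := by linarith
    _ ≤ κ * σ * L := by gcongr
    _ = σ * (κ * L) := by ring

theorem rowSumNorm_minKernel_le {ρ σ : ℕ → ℝ} {κ C : ℝ} (hs : ∀ k, 0 ≤ s k) (hb : ∀ k, 0 < b k)
    (hκ : 0 ≤ κ) (hσ : ∀ k, 0 < σ k) (hbρ : ∀ k, b k ≤ ρ k * b (k + 1))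
    (hsσ : ∀ k, (ρ k + σ k) * s k ≤ s (k + 1)) (hρ : ∀ k, ρ k - 1 ≤ κ * σ k)
    (hC : ∀ k ≤ m, (1 + κ) * (b k * ∑ j ∈ Finset.range (k + 1), s j * b j) ≤ C) :
    rowSumNorm (minKernel s b (m + 1)) ≤ C := by
  obtain ⟨p, hp⟩ := Finite.exists_max fun k : Fin (m + 1) => minKernelRow s b (m + 1) k
  set L := ∑ j ∈ Finset.range (p + 1 : ℕ), s j * b j
  set U := ∑ j ∈ Finset.Ico (p + 1 : ℕ) (m + 1), b j with hU
  have hL₀ : 0 ≤ L := Finset.sum_nonneg fun j _ => mul_nonneg (hs j) (hb j).le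
  have hU₀ : 0 ≤ U := Finset.sum_nonneg fun j _ => (hb j).le
  have hright : s p * U ≤ κ * L := by
    rcases (Nat.le_of_lt_succ p.isLt).eq_or_lt with hlast | hlt
    · rw [hU, hlast, Finset.Ico_self, Finset.sum_empty, mul_zero]
      positivity
    · have hrow := hp ⟨p + 1, Nat.succ_lt_succ hlt⟩
      rw [minKernelRow_succ s b (Nat.succ_lt_succ hlt)] at hrow
      exact right_le_of_succ_row_le (hb _) (hs p) hL₀ hU₀ (hσ p) (hbρ p) (hsσ p) (hρ p) hrow
  refine ciSup_le fun k => ?_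
  calc ∑ j, |minKernel s b (m + 1) k j|
      = ∑ j, minKernel s b (m + 1) k j := Finset.sum_congr rfl fun j _ =>
        abs_of_nonneg (mul_nonneg (mul_nonneg (hs _) (hb k).le) (hb j).le)
    _ = minKernelRow s b (m + 1) k := sum_minKernel_apply s b k
    _ ≤ b p * (L + s p * U) := hp k
    _ ≤ b p * (L + κ * L) := by gcongr; exact (hb p).le
    _ = (1 + κ) * (b p * L) := by ring
    _ ≤ C := hC p (Nat.le_of_lt_succ p.isLt)

end RowSumNorm

/-- Closed form of the partial sums of `α_i²` and `α̃_i²`, that is, of `∑ (x + λ)² h_x²` over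
`x = y - 1, y - 3, …`; even `y` give the `α_i²` and odd `y` the `α̃_i²`. -/
noncomputable def gegSum (lam y : ℝ) : ℝ :=
  Real.Gamma (y + 2 * lam + 1) / (2 * (2 * lam + 1) * Real.Gamma y)

/-- The weight `1/h_y`, which is `β_k` at `y = 2k` and `β̃_k` at `y = 2k - 1`. -/
noncomputable def gegWeight (lam y : ℝ) : ℝ :=
  1 / Real.sqrt (hsq lam y)

lemma gamma_add_two {x : ℝ} (hx : 0 < x) :
    Real.Gamma (x + 2) = (x + 1) * x * Real.Gamma x := by
  rw [show x + 2 = x + 1 + 1 by ring, Real.Gamma_add_one (by positivity), Real.Gamma_add_one hx.ne',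
    mul_assoc]

section GegenbauerNorms

variable {lam y : ℝ}

lemma hsq_pos_s15 (hy : 0 < y) (hlam : 0 < y + 2 * lam) : 0 < hsq lam y := by
  have := Real.Gamma_pos_of_pos hlam
  have := Real.Gamma_pos_of_pos (add_pos hy one_pos)
  have : 0 < y + lam := by linarith
  rw [hsq]
  positivity

lemma gegWeight_pos (hy : 0 < y) (hlam : 0 < y + 2 * lam) : 0 < gegWeight lam y :=
  one_div_pos.mpr (Real.sqrt_pos.mpr (hsq_pos_s15 hy hlam))

lemma gegSum_pos (hy : 0 < y) (hlam : 0 < 2 * lam + 1) : 0 < gegSum lam y := by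
  have := Real.Gamma_pos_of_pos (show 0 < y + 2 * lam + 1 by linarith)
  have := Real.Gamma_pos_of_pos hy
  rw [gegSum]
  positivity

lemma hsq_add_two (hy : 0 < y) (hlam : 0 < y + 2 * lam) :
    hsq lam (y + 2) = (y + lam) * (y + 2 * lam) * (y + 2 * lam + 1)
      / ((y + lam + 2) * (y + 1) * (y + 2)) * hsq lam y := by
  have := Real.Gamma_pos_of_pos (add_pos hy one_pos)
  have : 0 < y + lam := by linarith
  rw [hsq, hsq, add_right_comm y 2 (2 * lam), gamma_add_two hlam, add_right_comm y 2 lam,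
    add_right_comm y 2 1, gamma_add_two (by positivity)]
  field_simp
  ring

lemma gegSum_add_two_eq_mul (hy : 0 < y) (hlam : 0 < y + 2 * lam + 1) :
    gegSum lam (y + 2)
      = (y + 2 * lam + 1) * (y + 2 * lam + 2) / (y * (y + 1)) * gegSum lam y := by
  have := Real.Gamma_pos_of_pos hy
  rw [gegSum, gegSum, show y + 2 + 2 * lam + 1 = y + 2 * lam + 1 + 2 by ring, gamma_add_two hlam,
    gamma_add_two hy]
  field_simp
  ring

lemma hsq_add_one_eq_gegSum (hy : 0 < y) (hlam : 0 < 2 * lam + 1) :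
    hsq lam (y + 1) = 2 * (2 * lam + 1) / ((y + 1 + lam) * (y * (y + 1))) * gegSum lam y := by
  have := Real.Gamma_pos_of_pos hy
  rw [hsq, gegSum, show y + 1 + 2 * lam = y + 2 * lam + 1 by ring,
    Real.Gamma_add_one (s := y + 1) (by positivity), Real.Gamma_add_one hy.ne']
  field_simp

lemma gegSum_add_two (hy : 0 < y) (hlam : 0 < 2 * lam + 1) :
    gegSum lam (y + 2) = gegSum lam y + (y + 1 + lam) ^ 2 * hsq lam (y + 1) := by
  have : 0 < y + 1 + lam := by linarith
  rw [gegSum_add_two_eq_mul hy (by linarith), hsq_add_one_eq_gegSum hy hlam]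
  field_simp
  ring

lemma gegSum_mul_gegWeight_sq (hy : 0 < y) (hlam : 0 < y + 2 * lam) :
    gegSum lam y * gegWeight lam y ^ 2
      = y * (y + lam) * (y + 2 * lam) / (2 * (2 * lam + 1)) := by
  have := Real.Gamma_pos_of_pos hlam
  have := Real.Gamma_pos_of_pos hy
  have : 0 < y + lam := by linarith
  rw [gegWeight, div_pow, Real.sq_sqrt (hsq_pos_s15 hy hlam).le, gegSum, hsq,
    Real.Gamma_add_one hlam.ne', Real.Gamma_add_one hy.ne']
  field_simp

lemma hsq_add_two_le (hy : 0 < y) (hlam : 1 ≤ lam) :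
    hsq lam (y + 2) ≤ ((y + 2 * lam - 1) / (y + 1)) ^ 2 * hsq lam y := by
  have hh := hsq_pos_s15 hy (show 0 < y + 2 * lam by positivity)
  have hpoly : (y + lam) * (y + 2 * lam) * (y + 2 * lam + 1) * (y + 1)
      ≤ (y + 2 * lam - 1) ^ 2 * ((y + lam + 2) * (y + 2)) := by
    have hdiff : 0 ≤ (lam - 1) *
        (4 * y ^ 2 + 2 * (5 * lam + 2) * y + 4 * lam ^ 2 + 6 * lam + 4 * (lam - 1)) := by
      have : 0 ≤ lam - 1 := sub_nonneg.mpr hlam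
      positivity
    linarith
  rw [hsq_add_two hy (by positivity)]
  gcongr
  rw [div_pow, div_le_div_iff₀ (by positivity) (by positivity)]
  calc (y + lam) * (y + 2 * lam) * (y + 2 * lam + 1) * (y + 1) ^ 2
      = (y + lam) * (y + 2 * lam) * (y + 2 * lam + 1) * (y + 1) * (y + 1) := by ring
    _ ≤ (y + 2 * lam - 1) ^ 2 * ((y + lam + 2) * (y + 2)) * (y + 1) := by gcongr
    _ = (y + 2 * lam - 1) ^ 2 * ((y + lam + 2) * (y + 1) * (y + 2)) := by ring

lemma gegWeight_le_mul_gegWeight_add_two (hy : 0 < y) (hlam : 1 ≤ lam) :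
    gegWeight lam y ≤ (y + 2 * lam - 1) / (y + 1) * gegWeight lam (y + 2) := by
  have hρ : 0 ≤ (y + 2 * lam - 1) / (y + 1) := div_nonneg (by linarith) (by positivity)
  have hsqrt := Real.sqrt_le_sqrt (hsq_add_two_le hy hlam)
  rw [Real.sqrt_mul (sq_nonneg _), Real.sqrt_sq hρ] at hsqrt
  rw [gegWeight, gegWeight, mul_one_div, div_le_div_iff₀
    (Real.sqrt_pos.mpr (hsq_pos_s15 hy (by positivity)))
    (Real.sqrt_pos.mpr (hsq_pos_s15 (by positivity) (by positivity))), one_mul]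
  exact hsqrt

lemma mul_gegSum_le_gegSum_add_two (hy : 0 < y) (hlam : 0 < 2 * lam + 1) :
    ((y + 2 * lam - 1) / (y + 1) + 2 * (lam + 2) / (y + 1)) * gegSum lam y
      ≤ gegSum lam (y + 2) := by
  have hs := gegSum_pos hy hlam
  rw [gegSum_add_two_eq_mul hy (by linarith), ← add_div]
  refine mul_le_mul_of_nonneg_right ?_ hs.le
  rw [div_le_div_iff₀ (by positivity) (by positivity)]
  have hdiff : 0 ≤ (2 * lam + 1) * (2 * lam + 2) * (y + 1) :=
    mul_nonneg (mul_nonneg hlam.le (by linarith)) (by linarith)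
  linarith

lemma gegSum_mul_gegWeight_mul_le (hy : 0 < y) (hlam : 1 ≤ lam) :
    gegSum lam y * gegWeight lam y * (y + 3 * lam + 6)
      ≤ gegSum lam (y + 2) * gegWeight lam (y + 2) * (y + lam + 2) := by
  have hs := gegSum_pos hy (show 0 < 2 * lam + 1 by positivity)
  have hw := gegWeight_pos (show 0 < y + 2 by positivity) (show 0 < y + 2 + 2 * lam by positivity)
  have hratio : (y + 2 * lam - 1) / (y + 1) * (y + 3 * lam + 6)
      ≤ (y + 2 * lam + 1) * (y + 2 * lam + 2) / (y * (y + 1)) * (y + lam + 2) := by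
    have hdiff : 0 ≤ (2 * lam ^ 2 + 8 * lam + 14) * y
        + (lam + 2) * (2 * lam + 1) * (2 * lam + 2) := by positivity
    rw [div_mul_eq_mul_div, div_mul_eq_mul_div, ← div_div,
      div_le_div_iff_of_pos_right (by positivity), le_div_iff₀ hy]
    linarith
  calc gegSum lam y * gegWeight lam y * (y + 3 * lam + 6)
      ≤ gegSum lam y * ((y + 2 * lam - 1) / (y + 1) * gegWeight lam (y + 2))
          * (y + 3 * lam + 6) := by
        gcongr
        exact gegWeight_le_mul_gegWeight_add_two hy hlam
    _ = gegSum lam y * gegWeight lam (y + 2)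
          * ((y + 2 * lam - 1) / (y + 1) * (y + 3 * lam + 6)) := by ring
    _ ≤ gegSum lam y * gegWeight lam (y + 2)
          * ((y + 2 * lam + 1) * (y + 2 * lam + 2) / (y * (y + 1)) * (y + lam + 2)) := by gcongr
    _ = gegSum lam (y + 2) * gegWeight lam (y + 2) * (y + lam + 2) := by
        rw [gegSum_add_two_eq_mul hy (by positivity)]
        ring

end GegenbauerNorms

/-- The common form of the matrices `A_m` (at `y₀ = 2`) and `Ã_m` (at `y₀ = 1`). -/
noncomputable def gegKernel (lam y₀ : ℝ) (m : ℕ) : Matrix (Fin m) (Fin m) ℝ :=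
  minKernel (fun i => gegSum lam (y₀ + 2 * i)) (fun i => gegWeight lam (y₀ + 2 * i)) m

section GegKernel

variable {lam y₀ : ℝ}

lemma sum_gegSum_mul_gegWeight_le (hy₀ : 0 < y₀) (hlam : 1 ≤ lam) (k : ℕ) :
    2 * (lam + 3) * ∑ j ∈ Finset.range (k + 1),
        gegSum lam (y₀ + 2 * j) * gegWeight lam (y₀ + 2 * j)
      ≤ gegSum lam (y₀ + 2 * k) * gegWeight lam (y₀ + 2 * k) * (y₀ + 2 * k + 3 * lam + 6) := by
  induction k with
  | zero =>
    have hs := gegSum_pos hy₀ (show 0 < 2 * lam + 1 by positivity)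
    have hw := gegWeight_pos hy₀ (show 0 < y₀ + 2 * lam by positivity)
    simp only [zero_add, Finset.sum_range_one, Nat.cast_zero, mul_zero, add_zero]
    rw [mul_comm]
    gcongr
    linarith
  | succ k ih =>
    have hstep := gegSum_mul_gegWeight_mul_le (show 0 < y₀ + 2 * k by positivity) hlam
    rw [Finset.sum_range_succ, mul_add, Nat.cast_add_one,
      show y₀ + 2 * ((k : ℝ) + 1) = y₀ + 2 * k + 2 by ring]
    linarith

lemma diag_gegKernel_le (hy₀ : 0 < y₀) (hlam : 1 ≤ lam) (k : ℕ) :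
    (1 + (lam - 1) / (lam + 2)) * (gegWeight lam (y₀ + 2 * k) * ∑ j ∈ Finset.range (k + 1),
        gegSum lam (y₀ + 2 * j) * gegWeight lam (y₀ + 2 * j))
      ≤ (y₀ + 2 * k) * (y₀ + 2 * k + lam) * (y₀ + 2 * k + 2 * lam) * (y₀ + 2 * k + 3 * lam + 6)
        / (4 * ((lam + 2) * (lam + 3))) := by
  have hy : 0 < y₀ + 2 * k := by positivity
  have hw := gegWeight_pos hy (show 0 < y₀ + 2 * k + 2 * lam by positivity)
  have hsum := sum_gegSum_mul_gegWeight_le hy₀ hlam k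
  have hdiag := gegSum_mul_gegWeight_sq hy (show 0 < y₀ + 2 * k + 2 * lam by positivity)
  rw [mul_comm, ← le_div_iff₀ (by positivity)] at hsum
  set y := y₀ + 2 * (k : ℝ)
  calc (1 + (lam - 1) / (lam + 2)) * (gegWeight lam y * ∑ j ∈ Finset.range (k + 1),
        gegSum lam (y₀ + 2 * j) * gegWeight lam (y₀ + 2 * j))
      = (2 * lam + 1) / (lam + 2) * (gegWeight lam y * ∑ j ∈ Finset.range (k + 1),
        gegSum lam (y₀ + 2 * j) * gegWeight lam (y₀ + 2 * j)) := by
        congr 1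
        field_simp
        ring
    _ ≤ (2 * lam + 1) / (lam + 2) * (gegWeight lam y *
          (gegSum lam y * gegWeight lam y * (y + 3 * lam + 6) / (2 * (lam + 3)))) := by gcongr
    _ = (2 * lam + 1) * (gegSum lam y * gegWeight lam y ^ 2) * (y + 3 * lam + 6)
          / (2 * ((lam + 2) * (lam + 3))) := by
        field_simp
    _ = y * (y + lam) * (y + 2 * lam) * (y + 3 * lam + 6) / (4 * ((lam + 2) * (lam + 3))) := by
        rw [hdiag]
        field_simp
        ring

theorem rowSumNorm_gegKernel_le (hy₀ : 0 < y₀) (hlam : 1 ≤ lam) (m : ℕ) :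
    rowSumNorm (gegKernel lam y₀ (m + 1)) ≤
      (y₀ + 2 * m) * (y₀ + 2 * m + lam) * (y₀ + 2 * m + 2 * lam) * (y₀ + 2 * m + 3 * lam + 6)
        / (4 * ((lam + 2) * (lam + 3))) := by
  have hy : ∀ k : ℕ, 0 < y₀ + 2 * (k : ℝ) := fun k => by positivity
  have hsucc : ∀ k : ℕ, y₀ + 2 * ((k + 1 : ℕ) : ℝ) = y₀ + 2 * k + 2 := fun k => by
    push_cast
    ring
  refine rowSumNorm_minKernel_le (ρ := fun k => (y₀ + 2 * k + 2 * lam - 1) / (y₀ + 2 * k + 1))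
    (σ := fun k => 2 * (lam + 2) / (y₀ + 2 * k + 1)) (κ := (lam - 1) / (lam + 2))
    (fun k => (gegSum_pos (hy k) (by positivity)).le)
    (fun k => gegWeight_pos (hy k) (by positivity))
    (div_nonneg (sub_nonneg.mpr hlam) (by positivity)) (fun k => by positivity) (fun k => ?_)
    (fun k => ?_) (fun k => le_of_eq ?_) (fun k hk => (diag_gegKernel_le hy₀ hlam k).trans ?_)
  · rw [hsucc]
    exact gegWeight_le_mul_gegWeight_add_two (hy k) hlam
  · rw [hsucc]
    exact mul_gegSum_le_gegSum_add_two (hy k) (by positivity)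
  · field_simp
    ring
  · gcongr

lemma sum_gegAlpha_sq (hlam : 0 < 2 * lam + 1) (k : ℕ) :
    ∑ i ∈ Finset.Icc 1 (k + 1), gegAlpha lam i ^ 2 = gegSum lam (2 + 2 * k) := by
  have halpha : ∀ k : ℕ,
      gegAlpha lam (k + 1) ^ 2 = (2 * k + 1 + lam) ^ 2 * hsq lam (2 * k + 1) := fun k => by
    have : (0 : ℝ) ≤ k := k.cast_nonneg
    rw [gegAlpha, mul_pow, Nat.cast_add_one, show 2 * ((k : ℝ) + 1) - 1 = 2 * k + 1 by ring,
      Real.sq_sqrt (hsq_pos_s15 (by positivity) (by linarith)).le]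
  induction k with
  | zero =>
    have : 0 < 1 + lam := by linarith
    rw [zero_add, Finset.Icc_self, Finset.sum_singleton, halpha, Nat.cast_zero, mul_zero, zero_add,
      add_zero, hsq, gegSum, one_add_one_eq_two, Real.Gamma_two,
      show 2 + 2 * lam + 1 = 2 * lam + 1 + 2 by ring, gamma_add_two hlam, add_comm 1 (2 * lam),
      eq_div_iff (by positivity)]
    field_simp
    ring
  | succ k ih =>
    rw [Finset.sum_Icc_succ_top (by omega), ih, halpha, Nat.cast_add_one,
      show 2 + 2 * ((k : ℝ) + 1) = 2 + 2 * k + 2 by ring, gegSum_add_two (by positivity) hlam]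
    ring_nf

lemma sum_gegAlphaTildeSq (hlam : 0 < 2 * lam + 1) (k : ℕ) :
    ∑ i ∈ Finset.Icc 1 (k + 1), gegAlphaTildeSq lam i = gegSum lam (1 + 2 * k) := by
  induction k with
  | zero =>
    rw [zero_add, Finset.Icc_self, Finset.sum_singleton, gegAlphaTildeSq, if_pos rfl, Nat.cast_zero,
      mul_zero, add_zero, gegSum, Real.Gamma_one, add_comm 1 (2 * lam), Real.Gamma_add_one hlam.ne']
    field_simp
  | succ k ih =>
    rw [Finset.sum_Icc_succ_top (by omega), ih, gegAlphaTildeSq, if_neg (by omega),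
      Nat.cast_add_one, Nat.cast_add_one, show 1 + 2 * ((k : ℝ) + 1) = 1 + 2 * k + 2 by ring,
      gegSum_add_two (by positivity) hlam]
    ring_nf

lemma gegBeta_succ (lam : ℝ) (k : ℕ) : gegBeta lam (k + 1) = gegWeight lam (2 + 2 * k) := by
  rw [gegBeta, gegWeight, Nat.cast_add_one, mul_add, mul_one, add_comm]

lemma gegBetaTilde_succ (lam : ℝ) (k : ℕ) :
    gegBetaTilde lam (k + 1) = gegWeight lam (1 + 2 * k) := by
  rw [gegBetaTilde, gegWeight, Nat.cast_add_one, show 2 * ((k : ℝ) + 1) - 1 = 1 + 2 * k by ring]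

lemma Amat_eq_gegKernel (hlam : 0 < 2 * lam + 1) (m : ℕ) : Amat lam m = gegKernel lam 2 m := by
  ext k j
  rw [Amat, Nat.add_min_add_right, sum_gegAlpha_sq hlam, gegBeta_succ, gegBeta_succ]
  rfl

lemma AmatTilde_eq_gegKernel (hlam : 0 < 2 * lam + 1) (m : ℕ) :
    AmatTilde lam m = gegKernel lam 1 m := by
  ext k j
  rw [AmatTilde, Nat.add_min_add_right, sum_gegAlphaTildeSq hlam, gegBetaTilde_succ,
    gegBetaTilde_succ]
  rfl

lemma rowSumNorm_Bmat_even (hlam : 0 < 2 * lam + 1) (m : ℕ) :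
    rowSumNorm (Bmat lam (2 + 2 * m)) = 4 * rowSumNorm (gegKernel lam 2 (m + 1)) := by
  rw [Bmat, if_pos (by omega), rowSumNorm_smul, Amat_eq_gegKernel hlam,
    show (2 + 2 * m + 1) / 2 = m + 1 by omega, abs_of_pos four_pos]

lemma rowSumNorm_Bmat_odd (hlam : 0 < 2 * lam + 1) (m : ℕ) :
    rowSumNorm (Bmat lam (1 + 2 * m)) = 4 * rowSumNorm (gegKernel lam 1 (m + 1)) := by
  rw [Bmat, if_neg (by omega), rowSumNorm_smul, AmatTilde_eq_gegKernel hlam,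
    show (1 + 2 * m + 1) / 2 = m + 1 by omega, abs_of_pos four_pos]

end GegKernel

theorem rowSumNorm_Bmat_le {lam : ℝ} (hlam : 1 ≤ lam) {n : ℕ} (hn : 1 ≤ n) :
    rowSumNorm (Bmat lam n) ≤ 1 / ((lam + 2) * (lam + 3)) *
      ((n : ℝ) * (n + lam) * (n + 2 * lam) * (n + 3 * lam + 6)) := by
  have hscale : ∀ P : ℝ,
      4 * (P / (4 * ((lam + 2) * (lam + 3)))) = 1 / ((lam + 2) * (lam + 3)) * P :=
    fun P => by field_simp
  rcases Nat.even_or_odd' (n - 1) with ⟨m, hm | hm⟩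
  · obtain rfl : n = 1 + 2 * m := by omega
    rw [rowSumNorm_Bmat_odd (by linarith), ← hscale]
    push_cast
    gcongr
    exact rowSumNorm_gegKernel_le one_pos hlam m
  · obtain rfl : n = 2 + 2 * m := by omega
    rw [rowSumNorm_Bmat_even (by linarith), ← hscale]
    push_cast
    gcongr
    exact rowSumNorm_gegKernel_le two_pos hlam m

lemma mul_mul_le_add_add_div_three_pow {K : Type*} [Field K] [LinearOrder K]
    [IsStrictOrderedRing K] {a b c : K} (ha : 0 ≤ a) (hb : 0 ≤ b) (hc : 0 ≤ c) :
    a * b * c ≤ ((a + b + c) / 3) ^ 3 := by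
  have hdiff : 0 ≤ (a + b + c) * ((a - b) ^ 2 + (b - c) ^ 2 + (c - a) ^ 2)
      + 6 * (a * (b - c) ^ 2 + b * (c - a) ^ 2 + c * (a - b) ^ 2) := by positivity
  linarith

theorem Bmat_rowSumNorm_bound_general (lam : ℝ) (hlam : 1 ≤ lam) (n : ℕ) (hn : 1 ≤ n) :
    rowSumNorm (Bmat lam n) ≤
      1/((lam + 2) * (lam + 3)) *
        ((n : ℝ) * ((n : ℝ) + lam) * ((n : ℝ) + 2*lam) * ((n : ℝ) + 3*lam + 6)) ∧
    1/((lam + 2) * (lam + 3)) *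
        ((n : ℝ) * ((n : ℝ) + lam) * ((n : ℝ) + 2*lam) * ((n : ℝ) + 3*lam + 6)) ≤
      1/((lam + 2) * (lam + 3)) * ((n : ℝ) * ((n : ℝ) + 2*lam + 2)^3) := by
  refine ⟨rowSumNorm_Bmat_le hlam hn, ?_⟩
  rw [mul_assoc (n : ℝ), mul_assoc (n : ℝ)]
  gcongr
  calc ((n : ℝ) + lam) * (n + 2 * lam) * (n + 3 * lam + 6)
      ≤ ((n + lam + (n + 2 * lam) + (n + 3 * lam + 6)) / 3) ^ 3 :=
        mul_mul_le_add_add_div_three_pow (by positivity) (by positivity) (by positivity)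
    _ = (n + 2 * lam + 2) ^ 3 := by ring

theorem Bmat_rowSumNorm_bound (lam : ℝ) (hlam : 2 < lam) (n : ℕ) (hn : 1 ≤ n) :
    rowSumNorm (Bmat lam n) ≤
      1/((lam + 2) * (lam + 3)) *
        ((n : ℝ) * ((n : ℝ) + lam) * ((n : ℝ) + 2*lam) * ((n : ℝ) + 3*lam + 6)) ∧
    1/((lam + 2) * (lam + 3)) *
        ((n : ℝ) * ((n : ℝ) + lam) * ((n : ℝ) + 2*lam) * ((n : ℝ) + 3*lam + 6)) ≤
      1/((lam + 2) * (lam + 3)) * ((n : ℝ) * ((n : ℝ) + 2*lam + 2)^3) :=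
  Bmat_rowSumNorm_bound_general lam (by linarith) n hn
end
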